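/- For every n,d ∈ ℕ with 1 ≤ d ≤ n and every function f : {-1,1}^n → ℂ of degree at most d, ‖f‖_{L_2} ≤ (2.69076)^d · ‖f‖_{L_1}. -/

import Mathlib

open scoped BigOperators ENNReal NNReal

noncomputable section

namespace HammingCube

variable {X : Type*} [NormedAddCommGroup X] [NormedSpace ℂ X]

/-- The sign ±1 associated to a boolean coordinate. -/
def sgn (b : Bool) : ℝ := if b then 1 else -1

/-- The Walsh function `w_A(ε) = ∏_{i ∈ A} ε_i`. -/
def walsh {n : ℕ} (A : Finset (Fin n)) (ε : Fin n → Bool) : ℝ := ∏ i ∈ A, sgn (ε i)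

/-- The Fourier–Walsh coefficient `f̂(A) = 2⁻ⁿ ∑_δ f(δ) w_A(δ)`. -/
def coeff {n : ℕ} (f : (Fin n → Bool) → X) (A : Finset (Fin n)) : X :=
  (2 ^ n : ℝ)⁻¹ • ∑ δ : Fin n → Bool, walsh A δ • f δ

/-- `f` has degree at most `d`: `f̂(A) = 0` whenever `|A| > d`. -/
def degLE {n : ℕ} (f : (Fin n → Bool) → X) (d : ℕ) : Prop :=
  ∀ A : Finset (Fin n), d < A.card → coeff f A = 0

/-- `f` belongs to the `d`-th tail space: `f̂(A) = 0` whenever `|A| < d`. -/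
def tailSpace {n : ℕ} (f : (Fin n → Bool) → X) (d : ℕ) : Prop :=
  ∀ A : Finset (Fin n), A.card < d → coeff f A = 0

/-- The heat semigroup `e^{-tΔ} f = ∑_A e^{-t|A|} f̂(A) w_A`. -/
def heat {n : ℕ} (t : ℝ) (f : (Fin n → Bool) → X) : (Fin n → Bool) → X :=
  fun ε => ∑ A : Finset (Fin n), Real.exp (-t * A.card) • walsh A ε • coeff f A

/-- The hypercube Laplacian `Δ f = ∑_A |A| f̂(A) w_A`. -/
def lap {n : ℕ} (f : (Fin n → Bool) → X) : (Fin n → Bool) → X :=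
  fun ε => ∑ A : Finset (Fin n), (A.card : ℝ) • walsh A ε • coeff f A

/-- The fractional Laplacian `Δ^γ f = ∑_A |A|^γ f̂(A) w_A`. -/
def fracLap {n : ℕ} (γ : ℝ) (f : (Fin n → Bool) → X) : (Fin n → Bool) → X :=
  fun ε => ∑ A : Finset (Fin n), ((A.card : ℝ) ^ γ) • walsh A ε • coeff f A

/-- The `i`-th discrete partial derivative. -/
def pderiv {n : ℕ} (i : Fin n) (f : (Fin n → Bool) → X) : (Fin n → Bool) → X :=
  fun ε => (2 : ℝ)⁻¹ • (f ε - f (Function.update ε i (!(ε i))))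

/-- The vector-valued `L_p` norm `(2⁻ⁿ ∑_ε ‖f(ε)‖^p)^{1/p}` for finite `p`. -/
def lpNorm {n : ℕ} {Y : Type*} [NormedAddCommGroup Y] (p : ℝ)
    (f : (Fin n → Bool) → Y) : ℝ :=
  ((2 ^ n : ℝ)⁻¹ * ∑ ε : Fin n → Bool, ‖f ε‖ ^ p) ^ (1 / p)

/-- The `L_∞` norm `max_ε ‖f(ε)‖`. -/
def linfNorm {n : ℕ} {Y : Type*} [NormedAddCommGroup Y]
    (f : (Fin n → Bool) → Y) : ℝ :=
  ⨆ ε : Fin n → Bool, ‖f ε‖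

/-- The `L_p` norm for `p ∈ [1,∞]` encoded as `p : ℝ≥0∞`. -/
def lpNormE {n : ℕ} {Y : Type*} [NormedAddCommGroup Y] (p : ℝ≥0∞)
    (f : (Fin n → Bool) → Y) : ℝ :=
  if p = ⊤ then linfNorm f else lpNorm p.toReal f

/-- The scalar `L_p` norm of the gradient `‖(∑_i |∂_i f|²)^{1/2}‖_{L_p}`. -/
def gradLpNorm {n : ℕ} (p : ℝ) (f : (Fin n → Bool) → ℂ) : ℝ :=
  lpNorm p (fun ε => Real.sqrt (∑ i : Fin n, ‖pderiv i f ε‖ ^ 2))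

/-- The Rademacher projection `Rad f(ε) = ∑_i f̂({i}) ε_i`. -/
def Rad {n : ℕ} (f : (Fin n → Bool) → X) : (Fin n → Bool) → X :=
  fun ε => ∑ i : Fin n, sgn (ε i) • coeff f {i}

/-- A complex Banach space is `K`-convex if the Rademacher projections are uniformly
bounded on `L_q` for some `q ∈ (1,∞)`. -/
def KConvex (X : Type*) [NormedAddCommGroup X] [NormedSpace ℂ X] : Prop :=
  ∃ q : ℝ, 1 < q ∧ ∃ M : ℝ, ∀ (n : ℕ) (f : (Fin n → Bool) → X),
    lpNorm q (Rad f) ≤ M * lpNorm q f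

/-- `X` has cotype `q` with constant `C`. -/
def HasCotype (X : Type*) [NormedAddCommGroup X] [NormedSpace ℂ X] (q C : ℝ) : Prop :=
  ∀ (n : ℕ) (x : Fin n → X),
    C⁻¹ * (∑ i : Fin n, ‖x i‖ ^ q) ^ (1 / q) ≤
      ((2 ^ n : ℝ)⁻¹ * ∑ ε : Fin n → Bool, ‖∑ i : Fin n, sgn (ε i) • x i‖ ^ q) ^ (1 / q)

/-- The entropy `Ent(h)` of a nonnegative function on the cube. -/
def entropy {n : ℕ} (h : (Fin n → Bool) → ℝ) : ℝ :=
  (2 ^ n : ℝ)⁻¹ * ∑ ε : Fin n → Bool, h ε * Real.log (h ε) -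
    ((2 ^ n : ℝ)⁻¹ * ∑ ε : Fin n → Bool, h ε) *
      Real.log ((2 ^ n : ℝ)⁻¹ * ∑ ε : Fin n → Bool, h ε)

/-- The `L_∞` norm of the gradient `max_ε (∑_i |∂_i f(ε)|²)^{1/2}`. -/
def gradLinfNorm {n : ℕ} (f : (Fin n → Bool) → ℂ) : ℝ :=
  ⨆ ε : Fin n → Bool, Real.sqrt (∑ i : Fin n, ‖pderiv i f ε‖ ^ 2)

/-!
Call `T_w f = ∑_A w^{|A|} f̂(A) w_A` the noise operator with complex parameter `w`. A two-point
inequality, tensorized by Minkowski's inequality, shows that `T_w : L_{4/3} → L_4` is a contraction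
for every `w` in the ellipse with semi-axes `1/3` (real) and `√2/3` (imaginary). If `f` has degree
at most `d`, then `w ↦ T_w f` is a polynomial of degree at most `d`, and the boundary of the ellipse
is the image of the unit circle under a Joukowski map `φ ζ = α / ζ + β ζ` with `φ ζ₀ = 1` for
`ζ₀ = (√2 + 1) (√10 - 3)`. The maximum principle for `ζ ^ d T_{φ ζ} f` on the unit disk therefore
gives `‖f‖₄ = ‖T₁ f‖₄ ≤ ζ₀⁻ᵈ ‖f‖_{4/3}`. Interpolating `L_2` between `L_1` and `L_4`, and `L_{4/3}`
between `L_1` and `L_2`, turns this into `‖f‖₂ ≤ ζ₀⁻ᵈ ‖f‖₁`, where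
`ζ₀⁻¹ = (√2 - 1) (3 + √10) = 2.5524…`.
-/

section LpNorm

variable {n : ℕ} {Y : Type*} [NormedAddCommGroup Y]

lemma lpNorm_nonneg (p : ℝ) (f : (Fin n → Bool) → Y) : 0 ≤ lpNorm p f := by
  unfold lpNorm
  positivity

lemma lpNorm_rpow_self {p : ℝ} (hp : p ≠ 0) (f : (Fin n → Bool) → Y) :
    lpNorm p f ^ p = (2 ^ n : ℝ)⁻¹ * ∑ ε, ‖f ε‖ ^ p := by
  rw [lpNorm, ← Real.rpow_mul (by positivity), one_div_mul_cancel hp, Real.rpow_one]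

lemma lpNorm_norm_rpow {s : ℝ} (hs : s ≠ 0) (p : ℝ) (f : (Fin n → Bool) → Y) :
    lpNorm p (fun ε => ‖f ε‖ ^ s) = lpNorm (s * p) f ^ s := by
  simp only [lpNorm, Real.norm_of_nonneg (Real.rpow_nonneg (norm_nonneg _) s),
    ← Real.rpow_mul (norm_nonneg _)]
  rw [← Real.rpow_mul (by positivity)]
  congr 1
  field_simp

lemma lpNorm_eq_norm_toLp {p : ℝ} (hp : 0 < p) (f : (Fin n → Bool) → Y) :
    lpNorm p f = (2 ^ n : ℝ)⁻¹ ^ (1 / p) * ‖WithLp.toLp (ENNReal.ofReal p) f‖ := by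
  have htoReal : (ENNReal.ofReal p).toReal = p := ENNReal.toReal_ofReal hp.le
  rw [PiLp.norm_eq_sum (by rwa [htoReal]), htoReal, lpNorm,
    Real.mul_rpow (by positivity) (by positivity)]

lemma lpNorm_add_le {p : ℝ} (hp : 1 ≤ p) (f g : (Fin n → Bool) → Y) :
    lpNorm p (f + g) ≤ lpNorm p f + lpNorm p g := by
  have : Fact (1 ≤ ENNReal.ofReal p) := ⟨ENNReal.one_le_ofReal.2 hp⟩
  simp only [lpNorm_eq_norm_toLp (zero_lt_one.trans_le hp), WithLp.toLp_add, ← mul_add]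
  gcongr
  exact norm_add_le _ _

lemma lpNorm_smul {𝕜 : Type*} [NormedField 𝕜] [NormedSpace 𝕜 Y] {p : ℝ} (hp : 1 ≤ p) (c : 𝕜)
    (f : (Fin n → Bool) → Y) : lpNorm p (c • f) = ‖c‖ * lpNorm p f := by
  have : Fact (1 ≤ ENNReal.ofReal p) := ⟨ENNReal.one_le_ofReal.2 hp⟩
  simp only [lpNorm_eq_norm_toLp (zero_lt_one.trans_le hp), WithLp.toLp_smul, norm_smul,
    mul_left_comm]

lemma lpNorm_mul_le {R : Type*} [NormedRing R] {p q r : ℝ} (hpqr : p.HolderTriple q r)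
    (f g : (Fin n → Bool) → R) : lpNorm r (f * g) ≤ lpNorm p f * lpNorm q g := by
  have hr : 0 < r := hpqr.pos'
  have hexp : r / p + r / q = 1 := by
    rw [div_eq_mul_inv, div_eq_mul_inv, ← mul_add, hpqr.inv_add_inv_eq_inv, mul_inv_cancel₀ hr.ne']
  have hrpow {s : ℝ} (hs : 0 < s) (h : (Fin n → Bool) → R) :
      lpNorm s h ^ r = (2 ^ n : ℝ)⁻¹ ^ (r / s) * (∑ ε, ‖h ε‖ ^ s) ^ (r / s) := by
    rw [← Real.mul_rpow (by positivity) (by positivity), ← lpNorm_rpow_self hs.ne',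
      ← Real.rpow_mul (lpNorm_nonneg _ _), mul_div_cancel₀ _ hs.ne']
  refine (Real.rpow_le_rpow_iff (lpNorm_nonneg _ _)
    (mul_nonneg (lpNorm_nonneg _ _) (lpNorm_nonneg _ _)) hr).1 ?_
  calc lpNorm r (f * g) ^ r = (2 ^ n : ℝ)⁻¹ * ∑ ε, ‖f ε * g ε‖ ^ r := lpNorm_rpow_self hr.ne' _
    _ ≤ (2 ^ n : ℝ)⁻¹ * ∑ ε, (‖f ε‖ * ‖g ε‖) ^ r := by
        gcongr
        exact norm_mul_le _ _
    _ ≤ (2 ^ n : ℝ)⁻¹ * ((∑ ε, ‖f ε‖ ^ p) ^ (r / p) * (∑ ε, ‖g ε‖ ^ q) ^ (r / q)) := by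
        gcongr
        exact Real.Lr_rpow_le_Lp_mul_Lq_of_nonneg _ hpqr (fun _ _ => norm_nonneg _)
          fun _ _ => norm_nonneg _
    _ = (2 ^ n : ℝ)⁻¹ ^ (r / p + r / q) *
          ((∑ ε, ‖f ε‖ ^ p) ^ (r / p) * (∑ ε, ‖g ε‖ ^ q) ^ (r / q)) := by
        rw [hexp, Real.rpow_one]
    _ = (lpNorm p f * lpNorm q g) ^ r := by
        rw [Real.mul_rpow (lpNorm_nonneg _ _) (lpNorm_nonneg _ _), hrpow hpqr.pos,
          hrpow hpqr.symm.pos, Real.rpow_add (by positivity), mul_mul_mul_comm]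

lemma lpNorm_le_rpow_mul_rpow {p q r θ : ℝ} (hp : 0 < p) (hq : 0 < q) (hθ₀ : 0 < θ)
    (hθ₁ : θ < 1) (hpqr : θ / p + (1 - θ) / q = 1 / r) (f : (Fin n → Bool) → Y) :
    lpNorm r f ≤ lpNorm p f ^ θ * lpNorm q f ^ (1 - θ) := by
  have hθ₁' : 0 < 1 - θ := sub_pos.2 hθ₁
  have htriple : (p / θ).HolderTriple (q / (1 - θ)) r :=
    ⟨by rw [inv_div, inv_div, hpqr, one_div], by positivity, by positivity⟩
  calc lpNorm r f = lpNorm r ((fun ε => ‖f ε‖ ^ θ) * fun ε => ‖f ε‖ ^ (1 - θ)) := by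
        simp [lpNorm, ← Real.rpow_add_of_nonneg, hθ₀.le, hθ₁'.le]
    _ ≤ lpNorm (p / θ) (fun ε => ‖f ε‖ ^ θ) * lpNorm (q / (1 - θ)) (fun ε => ‖f ε‖ ^ (1 - θ)) :=
        lpNorm_mul_le htriple _ _
    _ = lpNorm p f ^ θ * lpNorm q f ^ (1 - θ) := by
        rw [lpNorm_norm_rpow hθ₀.ne', lpNorm_norm_rpow hθ₁'.ne', mul_div_cancel₀ _ hθ₀.ne',
          mul_div_cancel₀ _ hθ₁'.ne']

lemma lpNorm_two_le_of_lpNorm_four_le {K : ℝ} (hK : 0 ≤ K) {f : (Fin n → Bool) → Y}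
    (hf : lpNorm 4 f ≤ K * lpNorm (4 / 3) f) : lpNorm 2 f ≤ K * lpNorm 1 f := by
  have h₁ := lpNorm_nonneg 1 f
  have h₂ := lpNorm_nonneg 2 f
  have h₄ := lpNorm_nonneg 4 f
  have hcube : lpNorm 2 f ^ 3 ≤ lpNorm 1 f * lpNorm 4 f ^ 2 := by
    have hinterp := lpNorm_le_rpow_mul_rpow one_pos four_pos (r := 2) (θ := 1 / 3)
      (by norm_num) (by norm_num) (by norm_num) f
    calc lpNorm 2 f ^ 3 ≤ (lpNorm 1 f ^ (1 / 3 : ℝ) * lpNorm 4 f ^ (1 - 1 / 3 : ℝ)) ^ 3 :=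
          pow_le_pow_left₀ h₂ hinterp 3
      _ = lpNorm 1 f * lpNorm 4 f ^ 2 := by
          rw [mul_pow, ← Real.rpow_mul_natCast h₁, ← Real.rpow_mul_natCast h₄]
          norm_num
  have hsq : lpNorm (4 / 3) f ^ 2 ≤ lpNorm 1 f * lpNorm 2 f := by
    have hinterp := lpNorm_le_rpow_mul_rpow one_pos two_pos (r := 4 / 3) (θ := 1 / 2)
      (by norm_num) (by norm_num) (by norm_num) f
    calc lpNorm (4 / 3) f ^ 2 ≤ (lpNorm 1 f ^ (1 / 2 : ℝ) * lpNorm 2 f ^ (1 - 1 / 2 : ℝ)) ^ 2 :=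
          pow_le_pow_left₀ (lpNorm_nonneg _ f) hinterp 2
      _ = lpNorm 1 f * lpNorm 2 f := by
          rw [mul_pow, ← Real.rpow_mul_natCast h₁, ← Real.rpow_mul_natCast h₂]
          norm_num
  rcases h₂.eq_or_lt with hzero | hpos
  · rw [← hzero]
    positivity
  · refine le_of_sq_le_sq ?_ (by positivity)
    refine le_of_mul_le_mul_right ?_ hpos
    calc lpNorm 2 f ^ 2 * lpNorm 2 f = lpNorm 2 f ^ 3 := by ring
      _ ≤ lpNorm 1 f * (K * lpNorm (4 / 3) f) ^ 2 := hcube.trans (by gcongr)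
      _ = lpNorm 1 f * K ^ 2 * lpNorm (4 / 3) f ^ 2 := by ring
      _ ≤ lpNorm 1 f * K ^ 2 * (lpNorm 1 f * lpNorm 2 f) := by gcongr
      _ = (K * lpNorm 1 f) ^ 2 * lpNorm 2 f := by ring

lemma lpNorm_div_norm_rpow_add_norm_rpow_le {p q : ℝ} (hp : 0 < p) (hpq : p ≤ q)
    (f g : (Fin n → Bool) → Y) :
    lpNorm (q / p) (fun ε => (‖f ε‖ ^ p + ‖g ε‖ ^ p) / 2) ≤
      (lpNorm q f ^ p + lpNorm q g ^ p) / 2 := by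
  have hqp : 1 ≤ q / p := (one_le_div hp).2 hpq
  calc lpNorm (q / p) (fun ε => (‖f ε‖ ^ p + ‖g ε‖ ^ p) / 2)
      = lpNorm (q / p) ((2⁻¹ : ℝ) • ((fun ε => ‖f ε‖ ^ p) + fun ε => ‖g ε‖ ^ p)) := by
        congr 1 with ε
        simp [div_eq_inv_mul]
    _ ≤ 2⁻¹ * (lpNorm (q / p) (fun ε => ‖f ε‖ ^ p) + lpNorm (q / p) fun ε => ‖g ε‖ ^ p) := by
        rw [lpNorm_smul hqp, Real.norm_of_nonneg (by norm_num)]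
        gcongr
        exact lpNorm_add_le hqp _ _
    _ = (lpNorm q f ^ p + lpNorm q g ^ p) / 2 := by
        rw [lpNorm_norm_rpow hp.ne', lpNorm_norm_rpow hp.ne', mul_div_cancel₀ _ hp.ne',
          div_eq_inv_mul]

lemma sum_cube_succ {M : Type*} [AddCommMonoid M] (F : (Fin (n + 1) → Bool) → M) :
    ∑ ε, F ε = ∑ b, ∑ ε : Fin n → Bool, F (Fin.cons b ε) := by
  rw [← (Fin.consEquiv fun _ => Bool).sum_comp F, Fintype.sum_prod_type]
  rfl

lemma lpNorm_rpow_self_succ {p : ℝ} (hp : p ≠ 0) (f : (Fin (n + 1) → Bool) → Y) :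
    lpNorm p f ^ p = (lpNorm p (fun ε => f (Fin.cons true ε)) ^ p +
      lpNorm p (fun ε => f (Fin.cons false ε)) ^ p) / 2 := by
  simp only [lpNorm_rpow_self hp, sum_cube_succ, Fintype.sum_bool]
  ring

end LpNorm

/-- Two-point hypercontractivity from `L_p` to `L_q` with complex parameter `w`: the inequality
`‖T_w f‖_{L_q} ≤ ‖f‖_{L_p}` for the functions `f(±1) = a ± b` on the one-dimensional cube, for
which `T_w f(±1) = a ± w b`. Both sides are raised to the power `q` to avoid the outer roots. -/
def TwoPointInequality (X : Type*) [NormedAddCommGroup X] [NormedSpace ℂ X]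
    (p q : ℝ) (w : ℂ) : Prop :=
  ∀ a b : X, (‖a + w • b‖ ^ q + ‖a - w • b‖ ^ q) / 2 ≤
    ((‖a + b‖ ^ p + ‖a - b‖ ^ p) / 2) ^ (q / p)

/-- The noise operator `T_w f = ∑_A w^{|A|} f̂(A) w_A`, with complex parameter so that it is a
polynomial in `w`; `noise (e^{-t})` is the heat semigroup at time `t`. -/
def noise {n : ℕ} (w : ℂ) (f : (Fin n → Bool) → X) : (Fin n → Bool) → X :=
  fun ε => ∑ A : Finset (Fin n), w ^ A.card • walsh A ε • coeff f A

lemma noise_eq_sum_kernel {n : ℕ} (w : ℂ) (f : (Fin n → Bool) → X) (ε : Fin n → Bool) :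
    noise w f ε = ∑ δ, (∏ i, (1 + w * (sgn (ε i) * sgn (δ i) : ℝ)) / 2) • f δ := by
  have hkernel (δ : Fin n → Bool) : ∏ i, (1 + w * (sgn (ε i) * sgn (δ i) : ℝ)) / 2 =
      ∑ A : Finset (Fin n), w ^ A.card * (walsh A ε : ℝ) * ((2 ^ n)⁻¹ : ℝ) * (walsh A δ : ℝ) := by
    rw [Finset.prod_div_distrib, Finset.prod_one_add, Finset.powerset_univ, Finset.sum_div]
    refine Finset.sum_congr rfl fun A _ => ?_
    simp only [Finset.prod_mul_distrib, Finset.prod_const, walsh, Complex.ofReal_mul,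
      Complex.ofReal_prod, Finset.card_univ, Fintype.card_fin]
    push_cast
    ring
  simp only [noise, coeff, hkernel, Finset.sum_smul, Finset.smul_sum]
  rw [Finset.sum_comm]
  simp only [mul_smul, Complex.coe_smul]

lemma noise_one {n : ℕ} (f : (Fin n → Bool) → X) : noise 1 f = f := by
  funext ε
  rw [noise_eq_sum_kernel, Finset.sum_eq_single ε]
  · have hfactor (i : Fin n) : (1 + (1 : ℂ) * (sgn (ε i) * sgn (ε i) : ℝ)) / 2 = 1 := by
      cases ε i <;> simp [sgn]
    simp only [hfactor, Finset.prod_const_one, one_smul]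
  · intro δ _ hne
    obtain ⟨i, hi⟩ := Function.ne_iff.1 hne
    have hfactor : (1 + (1 : ℂ) * (sgn (ε i) * sgn (δ i) : ℝ)) / 2 = 0 := by
      cases h : ε i <;> cases h' : δ i <;> simp_all [sgn]
    rw [Finset.prod_eq_zero (Finset.mem_univ i) hfactor, zero_smul]
  · simp

lemma noise_cons {n : ℕ} (w : ℂ) (f : (Fin (n + 1) → Bool) → X) (b : Bool) (ε : Fin n → Bool) :
    noise w f (Fin.cons b ε) =
      ∑ c, ((1 + w * (sgn b * sgn c : ℝ)) / 2) • noise w (fun δ => f (Fin.cons c δ)) ε := by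
  simp only [noise_eq_sum_kernel, sum_cube_succ, Fin.prod_univ_succ, Fin.cons_zero, Fin.cons_succ,
    Finset.smul_sum, mul_smul]

lemma noise_fin_zero (w : ℂ) (f : (Fin 0 → Bool) → X) : noise w f = f := by
  funext ε
  rw [noise_eq_sum_kernel, Fintype.sum_subsingleton _ ε, Finset.univ_eq_empty, Finset.prod_empty,
    one_smul]

lemma TwoPointInequality.noise_cons_le {n : ℕ} {p q : ℝ} {w : ℂ} (h : TwoPointInequality X p q w)
    (f : (Fin (n + 1) → Bool) → X) (ε : Fin n → Bool) :
    (‖noise w f (Fin.cons true ε)‖ ^ q + ‖noise w f (Fin.cons false ε)‖ ^ q) / 2 ≤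
      ((‖noise w (fun δ => f (Fin.cons true δ)) ε‖ ^ p +
        ‖noise w (fun δ => f (Fin.cons false δ)) ε‖ ^ p) / 2) ^ (q / p) := by
  simp only [noise_cons, Fintype.sum_bool, sgn, if_true, Bool.false_eq_true, if_false]
  have hdecomp (u v : X) : ∃ a b : X, u = a + b ∧ v = a - b :=
    ⟨(2⁻¹ : ℂ) • (u + v), (2⁻¹ : ℂ) • (u - v), by module, by module⟩
  obtain ⟨a, b, hadd, hsub⟩ := hdecomp (noise w (fun δ => f (Fin.cons true δ)) ε)
    (noise w (fun δ => f (Fin.cons false δ)) ε)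
  rw [hadd, hsub]
  convert h a b using 4 <;> congr 1 <;> push_cast <;> module

lemma TwoPointInequality.lpNorm_noise_rpow_le {n : ℕ} {p q : ℝ} {w : ℂ}
    (h : TwoPointInequality X p q w) (hp : 0 < p) (hq : 0 < q) (f : (Fin (n + 1) → Bool) → X) :
    lpNorm q (noise w f) ^ p ≤
      lpNorm (q / p) (fun ε => (‖noise w (fun δ => f (Fin.cons true δ)) ε‖ ^ p +
        ‖noise w (fun δ => f (Fin.cons false δ)) ε‖ ^ p) / 2) := by
  have hqp : 0 < q / p := by positivity
  refine (Real.rpow_le_rpow_iff (by positivity [lpNorm_nonneg q (noise w f)])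
    (lpNorm_nonneg _ _) hqp).1 ?_
  rw [← Real.rpow_mul (lpNorm_nonneg _ _), mul_div_cancel₀ _ hp.ne', lpNorm_rpow_self_succ hq.ne',
    lpNorm_rpow_self hq.ne', lpNorm_rpow_self hq.ne', lpNorm_rpow_self hqp.ne', ← mul_add,
    mul_div_assoc, ← Finset.sum_add_distrib, Finset.sum_div]
  gcongr with ε
  rw [Real.norm_of_nonneg (by positivity)]
  exact h.noise_cons_le f ε

theorem TwoPointInequality.lpNorm_noise_le {n : ℕ} {p q : ℝ} {w : ℂ}
    (h : TwoPointInequality X p q w) (hp : 0 < p) (hpq : p ≤ q) (f : (Fin n → Bool) → X) :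
    lpNorm q (noise w f) ≤ lpNorm p f := by
  have hq : 0 < q := hp.trans_le hpq
  induction n with
  | zero => simp [noise_fin_zero, lpNorm, ← Real.rpow_mul, hp.ne', hq.ne']
  | succ n ih =>
    refine (Real.rpow_le_rpow_iff (lpNorm_nonneg _ _) (lpNorm_nonneg _ _) hp).1 ?_
    refine (h.lpNorm_noise_rpow_le hp hq f).trans <|
      (lpNorm_div_norm_rpow_add_norm_rpow_le hp hpq _ _).trans ?_
    rw [lpNorm_rpow_self_succ hp.ne']
    gcongr <;> first | exact lpNorm_nonneg _ _ | exact ih _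

lemma quartic_cube_add_sub_le {U V : ℝ} (hU : 0 ≤ U) (hV : 0 ≤ V) :
    (U ^ 3 + V ^ 3) ^ 4 + 2 / 3 * (U ^ 3 + V ^ 3) ^ 2 * (U ^ 3 - V ^ 3) ^ 2 +
      4 / 81 * (U ^ 3 - V ^ 3) ^ 4 ≤ 2 * (U ^ 4 + V ^ 4) ^ 3 := by
  have hfactor : 0 ≤ (U - V) ^ 4 * (23 * U ^ 8 + 92 * U ^ 7 * V + 230 * U ^ 6 * V ^ 2 +
      152 * U ^ 5 * V ^ 3 + 59 * U ^ 4 * V ^ 4 + 152 * U ^ 3 * V ^ 5 + 230 * U ^ 2 * V ^ 6 +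
      92 * U * V ^ 7 + 23 * V ^ 8) := by
    positivity [(show Even 4 by decide).pow_nonneg (U - V)]
  linear_combination hfactor / 81

lemma quartic_add_sub_le_rpow_four_thirds {x y : ℝ} (hx : 0 ≤ x) (hy : 0 ≤ y) :
    ((x + y) ^ 4 + 2 / 3 * (x + y) ^ 2 * (x - y) ^ 2 + 4 / 81 * (x - y) ^ 4) / 16 ≤
      ((x ^ (4 / 3 : ℝ) + y ^ (4 / 3 : ℝ)) / 2) ^ 3 := by
  have hcube {t : ℝ} (ht : 0 ≤ t) : (t ^ (1 / 3 : ℝ)) ^ 3 = t := by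
    rw [← Real.rpow_mul_natCast ht]
    norm_num
  have hfourth {t : ℝ} (ht : 0 ≤ t) : (t ^ (1 / 3 : ℝ)) ^ 4 = t ^ (4 / 3 : ℝ) := by
    rw [← Real.rpow_mul_natCast ht]
    norm_num
  have h := quartic_cube_add_sub_le (Real.rpow_nonneg hx (1 / 3)) (Real.rpow_nonneg hy (1 / 3))
  rw [hcube hx, hcube hy, hfourth hx, hfourth hy] at h
  linear_combination h / 16

lemma norm_sq_mul_add_two_mul_re_mul_sq_le {w c : ℂ} {P : ℝ}
    (hw : 18 * w.re ^ 2 + 9 * w.im ^ 2 ≤ 2) (hc : ‖c‖ ^ 2 ≤ P) :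
    ‖w‖ ^ 2 * P + 2 * (w * c).re ^ 2 ≤ P - 2 / 3 * c.re ^ 2 := by
  obtain ⟨p, q⟩ := w
  obtain ⟨x, y⟩ := c
  simp only [Complex.sq_norm, Complex.normSq_apply, Complex.mul_re] at hw hc ⊢
  have hradius : 0 ≤ 1 - (p ^ 2 + q ^ 2) := by nlinarith [sq_nonneg p, sq_nonneg q]
  have hellipse : 0 ≤ (2 - (18 * p ^ 2 + 9 * q ^ 2)) * (1 / 3 * x ^ 2 + y ^ 2) :=
    mul_nonneg (sub_nonneg.2 hw) (by positivity)
  linear_combination hellipse / 2 + sq_nonneg (q * x + 4 * p * y) / 2 +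
    3 / 2 * sq_nonneg (q * y) + mul_nonneg hradius (sub_nonneg.2 hc)

section InnerProductSpace

variable {H : Type*} [NormedAddCommGroup H] [InnerProductSpace ℂ H]

lemma norm_add_pow_four_add_norm_sub_pow_four {𝕜 E : Type*} [RCLike 𝕜] [SeminormedAddCommGroup E]
    [InnerProductSpace 𝕜 E] (a b : E) :
    ‖a + b‖ ^ 4 + ‖a - b‖ ^ 4 =
      2 * (‖a‖ ^ 2 + ‖b‖ ^ 2) ^ 2 + 8 * RCLike.re (inner 𝕜 a b) ^ 2 := by
  have hadd := norm_add_sq (𝕜 := 𝕜) a b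
  have hsub := norm_sub_sq (𝕜 := 𝕜) a b
  calc ‖a + b‖ ^ 4 + ‖a - b‖ ^ 4 = (‖a + b‖ ^ 2) ^ 2 + (‖a - b‖ ^ 2) ^ 2 := by ring
    _ = 2 * (‖a‖ ^ 2 + ‖b‖ ^ 2) ^ 2 + 8 * RCLike.re (inner 𝕜 a b) ^ 2 := by
        rw [hadd, hsub]
        ring

lemma norm_add_smul_pow_four_add_norm_sub_smul_pow_four_le {w : ℂ}
    (hw : 18 * w.re ^ 2 + 9 * w.im ^ 2 ≤ 2) (a b : H) :
    (‖a + w • b‖ ^ 4 + ‖a - w • b‖ ^ 4) / 2 ≤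
      (‖a‖ ^ 2 + ‖b‖ ^ 2) ^ 2 - 4 / 3 * (inner ℂ a b).re ^ 2 - 77 / 81 * ‖b‖ ^ 4 := by
  have hw_sq : ‖w‖ ^ 2 ≤ 2 / 9 := by
    rw [Complex.sq_norm, Complex.normSq_apply]
    nlinarith [sq_nonneg w.re]
  have hfourth : (‖w‖ ^ 2) ^ 2 * ‖b‖ ^ 4 ≤ (2 / 9) ^ 2 * ‖b‖ ^ 4 := by gcongr
  have hinner : ‖inner ℂ a b‖ ^ 2 ≤ ‖a‖ ^ 2 * ‖b‖ ^ 2 := by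
    rw [← mul_pow]
    gcongr
    exact norm_inner_le_norm a b
  have hquad := norm_sq_mul_add_two_mul_re_mul_sq_le hw hinner
  rw [norm_add_pow_four_add_norm_sub_pow_four (𝕜 := ℂ), norm_smul, inner_smul_right, mul_pow,
    RCLike.re_eq_complex_re]
  linear_combination hfourth + 2 * hquad

theorem twoPointInequality_of_mem_ellipse {w : ℂ} (hw : 18 * w.re ^ 2 + 9 * w.im ^ 2 ≤ 2) :
    TwoPointInequality H (4 / 3) 4 w := by
  intro a b
  have hexp : (4 : ℝ) / (4 / 3) = 3 := by norm_num
  simp only [hexp, Real.rpow_ofNat]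
  have hsum : (‖a + b‖ ^ 2 + ‖a - b‖ ^ 2) ^ 2 = (2 * (‖a‖ ^ 2 + ‖b‖ ^ 2)) ^ 2 :=
    congrArg (· ^ 2) (parallelogram_law_with_norm ℂ a b)
  have hdiff : (‖a + b‖ ^ 2 - ‖a - b‖ ^ 2) ^ 2 = (4 * (inner ℂ a b).re) ^ 2 := by
    rw [norm_add_sq (𝕜 := ℂ), norm_sub_sq (𝕜 := ℂ), RCLike.re_eq_complex_re]
    ring
  have hgap : |‖a + b‖ - ‖a - b‖| ≤ 2 * ‖b‖ := by
    calc |‖a + b‖ - ‖a - b‖| ≤ ‖(a + b) - (a - b)‖ := abs_norm_sub_norm_le _ _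
      _ = ‖(2 : ℂ) • b‖ := by congr 1; module
      _ = 2 * ‖b‖ := by rw [norm_smul, Complex.norm_ofNat]
  have hgap_pow : (‖a + b‖ - ‖a - b‖) ^ 4 ≤ (2 * ‖b‖) ^ 4 := by
    rw [← (show Even 4 by decide).pow_abs]
    gcongr
  calc (‖a + w • b‖ ^ 4 + ‖a - w • b‖ ^ 4) / 2
      ≤ (‖a‖ ^ 2 + ‖b‖ ^ 2) ^ 2 - 4 / 3 * (inner ℂ a b).re ^ 2 - 77 / 81 * ‖b‖ ^ 4 :=
        norm_add_smul_pow_four_add_norm_sub_smul_pow_four_le hw a b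
    _ ≤ ((‖a + b‖ + ‖a - b‖) ^ 4 +
          2 / 3 * (‖a + b‖ + ‖a - b‖) ^ 2 * (‖a + b‖ - ‖a - b‖) ^ 2 +
          4 / 81 * (‖a + b‖ - ‖a - b‖) ^ 4) / 16 := by
        linear_combination -hsum / 4 + hdiff / 12 + 77 / 81 / 16 * hgap_pow
    _ ≤ ((‖a + b‖ ^ (4 / 3 : ℝ) + ‖a - b‖ ^ (4 / 3 : ℝ)) / 2) ^ 3 :=
        quartic_add_sub_le_rpow_four_thirds (norm_nonneg _) (norm_nonneg _)

end InnerProductSpace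

/-- The Joukowski map `ζ ↦ α / ζ + β ζ`, which for real `α`, `β` maps the unit circle onto an
ellipse; it parametrizes the noise parameters to which the maximum principle is applied. The
junk value of the division makes it vanish at `ζ = 0`. -/
def joukowski (α β ζ : ℂ) : ℂ := α / ζ + β * ζ

lemma joukowski_of_norm_eq_one (α β : ℝ) {ζ : ℂ} (hζ : ‖ζ‖ = 1) :
    joukowski α β ζ = ⟨(β + α) * ζ.re, (β - α) * ζ.im⟩ := by
  rw [joukowski, div_eq_mul_inv, Complex.inv_eq_conj hζ]
  apply Complex.ext <;> simp <;> ring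

theorem pow_mul_norm_sum_joukowski_pow_smul_le {E : Type*} [NormedAddCommGroup E]
    [NormedSpace ℂ E] {ι : Type*} [Fintype ι] {k : ι → ℕ} {d : ℕ} {v : ι → E}
    (hv : ∀ i, d < k i → v i = 0) {α β : ℂ} {M : ℝ}
    (hM : ∀ ζ : ℂ, ‖ζ‖ = 1 → ‖∑ i, joukowski α β ζ ^ k i • v i‖ ≤ M)
    {z : ℂ} (hz₀ : z ≠ 0) (hz : ‖z‖ ≤ 1) :
    ‖z‖ ^ d * ‖∑ i, joukowski α β z ^ k i • v i‖ ≤ M := by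
  let Q : ℂ → E := fun ζ => ∑ i, (ζ ^ (d - k i) * (α + β * ζ ^ 2) ^ k i) • v i
  have hQ {ζ : ℂ} (hζ : ζ ≠ 0) :
      ‖Q ζ‖ = ‖ζ‖ ^ d * ‖∑ i, joukowski α β ζ ^ k i • v i‖ := by
    rw [← norm_pow, ← norm_smul, Finset.smul_sum]
    congr 1
    refine Finset.sum_congr rfl fun i _ => ?_
    rcases lt_or_ge d (k i) with hi | hi
    · simp only [hv i hi, smul_zero]
    · rw [smul_smul, ← pow_sub_mul_pow ζ hi, mul_assoc, ← mul_pow, joukowski]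
      congr 4
      field_simp
  have hQ_diff : Differentiable ℂ Q := by fun_prop
  rw [← hQ hz₀]
  refine Complex.norm_le_of_forall_mem_frontier_norm_le (U := Metric.ball 0 1)
    Metric.isBounded_ball hQ_diff.diffContOnCl (fun ζ hζ => ?_) ?_
  · rw [frontier_ball _ one_ne_zero, mem_sphere_zero_iff_norm] at hζ
    have hζ₀ : ζ ≠ 0 := norm_ne_zero_iff.1 (hζ ▸ one_ne_zero)
    rw [hQ hζ₀, hζ, one_pow, one_mul]
    exact hM ζ hζ
  · rwa [closure_ball _ one_ne_zero, mem_closedBall_zero_iff]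

theorem pow_mul_lpNorm_noise_joukowski_le {n d : ℕ} {p : ℝ} (hp : 1 ≤ p)
    {f : (Fin n → Bool) → X} (hf : degLE f d) {α β : ℂ} {M : ℝ}
    (hM : ∀ ζ : ℂ, ‖ζ‖ = 1 → lpNorm p (noise (joukowski α β ζ) f) ≤ M)
    {z : ℂ} (hz₀ : z ≠ 0) (hz : ‖z‖ ≤ 1) :
    ‖z‖ ^ d * lpNorm p (noise (joukowski α β z) f) ≤ M := by
  have : Fact (1 ≤ ENNReal.ofReal p) := ⟨ENNReal.one_le_ofReal.2 hp⟩
  let v (A : Finset (Fin n)) : PiLp (ENNReal.ofReal p) fun _ : Fin n → Bool => X :=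
    (2 ^ n : ℝ)⁻¹ ^ (1 / p) • WithLp.toLp _ fun ε => walsh A ε • coeff f A
  have hv (A : Finset (Fin n)) (hA : d < A.card) : v A = 0 := by
    ext ε
    simp [v, hf A hA]
  have hnorm (w : ℂ) : lpNorm p (noise w f) = ‖∑ A, w ^ A.card • v A‖ := by
    have hsum : ∑ A, w ^ A.card • v A =
        (2 ^ n : ℝ)⁻¹ ^ (1 / p) • WithLp.toLp (ENNReal.ofReal p) (noise w f) := by
      ext ε
      simp only [v, noise, WithLp.ofLp_sum, WithLp.ofLp_smul, Finset.sum_apply, Pi.smul_apply,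
        Finset.smul_sum, smul_comm (w ^ _)]
    rw [hsum, norm_smul, Real.norm_of_nonneg (by positivity),
      lpNorm_eq_norm_toLp (zero_lt_one.trans_le hp)]
  simp only [hnorm] at hM ⊢
  exact pow_mul_norm_sum_joukowski_pow_smul_le hv hM hz₀ hz

lemma lpNorm_noise_joukowski_le {H : Type*} [NormedAddCommGroup H] [InnerProductSpace ℂ H]
    {n : ℕ} (f : (Fin n → Bool) → H) {ζ : ℂ} (hζ : ‖ζ‖ = 1) :
    lpNorm 4 (noise (joukowski ((1 + √2) / 6 : ℝ) ((1 - √2) / 6 : ℝ) ζ) f) ≤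
      lpNorm (4 / 3) f := by
  have hζ_sq : ζ.re ^ 2 + ζ.im ^ 2 = 1 := by
    rw [← one_pow 2, ← hζ, Complex.sq_norm, Complex.normSq_apply]
    ring
  have hsqrt : √2 ^ 2 = 2 := Real.sq_sqrt zero_le_two
  refine (twoPointInequality_of_mem_ellipse ?_).lpNorm_noise_le (by norm_num) (by norm_num) f
  rw [joukowski_of_norm_eq_one _ _ hζ]
  linear_combination 2 * hζ_sq + ζ.im ^ 2 * hsqrt

lemma inv_sqrt_two_add_one_mul_sqrt_ten_sub_three :
    ((√2 + 1) * (√10 - 3))⁻¹ = (√2 - 1) * (3 + √10) := by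
  have hsqrt_two : √2 ^ 2 = 2 := Real.sq_sqrt (by norm_num)
  have hsqrt_ten : √10 ^ 2 = 10 := Real.sq_sqrt (by norm_num)
  refine inv_eq_of_mul_eq_one_right ?_
  linear_combination (√10 ^ 2 - 9) * hsqrt_two + hsqrt_ten

lemma joukowski_sqrt_two_add_one_mul_sqrt_ten_sub_three :
    joukowski ((1 + √2) / 6 : ℝ) ((1 - √2) / 6 : ℝ) ((√2 + 1) * (√10 - 3) : ℝ) = 1 := by
  have hsqrt : √2 ^ 2 = 2 := Real.sq_sqrt zero_le_two
  rw [joukowski, div_eq_mul_inv, ← Complex.ofReal_inv, inv_sqrt_two_add_one_mul_sqrt_ten_sub_three]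
  norm_cast
  linear_combination hsqrt

lemma sqrt_two_sub_one_mul_three_add_sqrt_ten_nonneg : 0 ≤ (√2 - 1) * (3 + √10) :=
  mul_nonneg (sub_nonneg.2 (Real.one_le_sqrt.2 one_le_two)) (by positivity)

lemma sqrt_two_sub_one_mul_three_add_sqrt_ten_le : (√2 - 1) * (3 + √10) ≤ 2.69076 := by
  have hsqrt_two : √2 ≤ 1.4143 := Real.sqrt_le_iff.2 (by norm_num)
  have hsqrt_ten : √10 ≤ 3.163 := Real.sqrt_le_iff.2 (by norm_num)
  calc (√2 - 1) * (3 + √10) ≤ (1.4143 - 1) * (3 + 3.163) := by gcongr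
    _ ≤ 2.69076 := by norm_num

theorem lpNorm_four_le_of_degLE {H : Type*} [NormedAddCommGroup H] [InnerProductSpace ℂ H]
    {n d : ℕ} {f : (Fin n → Bool) → H} (hf : degLE f d) :
    lpNorm 4 f ≤ ((√2 - 1) * (3 + √10)) ^ d * lpNorm (4 / 3) f := by
  obtain ⟨z, hz⟩ : ∃ z : ℝ, z = (√2 + 1) * (√10 - 3) := ⟨_, rfl⟩
  have hsub_pos : 0 < √10 - 3 := sub_pos.2 (Real.lt_sqrt_of_sq_lt (by norm_num))
  have hz_pos : 0 < z := hz ▸ mul_pos (by positivity) hsub_pos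
  have hz_le : z ≤ 1 := by
    have hsqrt_two : √2 ≤ 2 := Real.sqrt_le_iff.2 (by norm_num)
    have hsqrt_ten : √10 ≤ 10 / 3 := Real.sqrt_le_iff.2 (by norm_num)
    calc z = (√2 + 1) * (√10 - 3) := hz
      _ ≤ (2 + 1) * (10 / 3 - 3) := by gcongr
      _ = 1 := by norm_num
  have hz_norm : ‖(z : ℂ)‖ = z := Complex.norm_of_nonneg hz_pos.le
  have hmax := pow_mul_lpNorm_noise_joukowski_le (by norm_num) hf
    (fun _ => lpNorm_noise_joukowski_le f) (Complex.ofReal_ne_zero.2 hz_pos.ne')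
    (hz_norm.trans_le hz_le)
  rw [hz_norm, hz, joukowski_sqrt_two_add_one_mul_sqrt_ten_sub_three, noise_one, ← hz] at hmax
  rwa [← inv_sqrt_two_add_one_mul_sqrt_ten_sub_three, ← hz, inv_pow, inv_mul_eq_div,
    le_div_iff₀' (by positivity)]

theorem stmt12_general {H : Type*} [NormedAddCommGroup H] [InnerProductSpace ℂ H] {n d : ℕ}
    {f : (Fin n → Bool) → H} (hf : degLE f d) :
    lpNorm 2 f ≤ ((√2 - 1) * (3 + √10)) ^ d * lpNorm 1 f :=
  lpNorm_two_le_of_lpNorm_four_le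
    (pow_nonneg sqrt_two_sub_one_mul_three_add_sqrt_ten_nonneg d) (lpNorm_four_le_of_degLE hf)

/-- **Improved `L₁`–`L₂` moment comparison for functions of low degree.** -/
theorem stmt12 (n d : ℕ) (hd : 1 ≤ d) (hdn : d ≤ n)
    (f : (Fin n → Bool) → ℂ) (hf : degLE f d) :
    lpNorm 2 f ≤ (2.69076 : ℝ) ^ d * lpNorm 1 f :=
  (stmt12_general hf).trans <| mul_le_mul_of_nonneg_right
    (pow_le_pow_left₀ sqrt_two_sub_one_mul_three_add_sqrt_ten_nonneg
      sqrt_two_sub_one_mul_three_add_sqrt_ten_le d) (lpNorm_nonneg 1 f)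

end HammingCube
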